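/- For any line l of P²(𝔽₃) the vector w_𝒫 = ω²θ l + Σ_{x ∈ l} x (sum over the point roots on l) is independent of the choice of l, and for any point x the vector w_ℒ = −ωθ x + Σ_{l ∋ x} l is independent of the choice of x. One has |w_𝒫|² = |w_ℒ|² = 3 and ⟨w_𝒫, w_ℒ⟩ = −4θω; w_𝒫 is orthogonal to all 13 point roots and w_ℒ to all 13 line roots. The sublattice F spanned by w_𝒫 and w_ℒ is primitive in L, has signature (1,1) and discriminant 39, and equals the sublattice of L fixed pointwise by G. -/

import Mathlib

noncomputable section

open ComplexConjugate

namespace Bimonster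

/-- The primitive cube root of unity `ω = e^{2πi/3}`. -/
def ω : ℂ := Complex.exp (2 * (Real.pi : ℂ) * Complex.I / 3)

/-- `θ = ω - ω̄ = √-3`. -/
def θ : ℂ := ω - conj ω

/-- `ξ = e^{-πi/6}`. -/
def ξ : ℂ := Complex.exp (-((Real.pi : ℂ) * Complex.I) / 6)

/-- Membership in the ring of Eisenstein integers `ℰ = ℤ[ω] ⊆ ℂ`. -/
def EisP (z : ℂ) : Prop := ∃ a b : ℤ, z = (a : ℂ) + (b : ℂ) * ω

/-- The units of the ring of Eisenstein integers. -/
def EisUnit (z : ℂ) : Prop :=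
  z = 1 ∨ z = -1 ∨ z = ω ∨ z = -ω ∨ z = ω ^ 2 ∨ z = -ω ^ 2

/-- The underlying 14-dimensional complex vector space of `L = 3E₈ ⊕ H`. -/
abbrev V : Type := Fin 14 → ℂ

/-- The Hermitian form of `L = 3E₈ ⊕ H`: negative definite standard form on the twelve
`E₈`-coordinates, and the hyperbolic cell with Gram matrix `[[0, θ̄], [θ, 0]]` on the
last two coordinates.  It is conjugate-linear in the first variable. -/
def herm (u v : V) : ℂ :=
  -(∑ i : Fin 12, conj (u (Fin.castLE (by norm_num) i)) * v (Fin.castLE (by norm_num) i)) +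
    conj (u 12) * conj θ * v 13 + conj (u 13) * θ * v 12

/-- First generator of the ternary tetracode `𝒞₄ ⊆ 𝔽₃⁴`. -/
def tet1 : Fin 4 → ℤ := ![1, 1, -1, 0]

/-- Second generator of the ternary tetracode `𝒞₄ ⊆ 𝔽₃⁴`. -/
def tet2 : Fin 4 → ℤ := ![0, 1, 1, 1]

/-- The complex `E₈` lattice: vectors of `ℰ⁴` whose reduction mod `θ` lies in the
ternary tetracode. -/
def inE8 (w : Fin 4 → ℂ) : Prop :=
  (∀ i, EisP (w i)) ∧
    ∃ s t : ℤ, ∀ i : Fin 4, ∃ a b : ℤ,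
      w i - ((tet1 i * s + tet2 i * t : ℤ) : ℂ) = θ * ((a : ℂ) + (b : ℂ) * ω)

/-- The lattice `L = 3E₈ ⊕ H` as a subset of `ℂ¹⁴`. -/
def Lset : Set V :=
  {v | (∀ k : Fin 3,
      inE8 fun i : Fin 4 =>
        v ⟨4 * (k : ℕ) + (i : ℕ), by have hk := k.isLt; have hi := i.isLt; omega⟩) ∧
    EisP (v 12) ∧ EisP (v 13)}

/-- A root of `L`: a primitive lattice vector of norm `-3`. -/
def IsRoot (r : V) : Prop :=
  r ∈ Lset ∧ herm r r = -3 ∧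
    ∀ α : ℂ, EisP α → ∀ y ∈ Lset, r = α • y → EisUnit α

/-- The `μ`-reflection in a vector `r`: `v ↦ v − (1−μ)·r·⟨r,v⟩/|r|²`. -/
def reflMap (μ : ℂ) (r v : V) : V := v - ((1 - μ) * herm r v / herm r r) • r

/-- The automorphism group of the lattice `L`: invertible `ℂ`-linear maps preserving
the lattice and the Hermitian form. -/
def AutL : Subgroup (V ≃ₗ[ℂ] V) where
  carrier := {g | (∀ v : V, v ∈ Lset ↔ g v ∈ Lset) ∧ ∀ u v : V, herm (g u) (g v) = herm u v}
  one_mem' := ⟨fun _ => Iff.rfl, fun _ _ => rfl⟩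
  mul_mem' := by
    rintro f g ⟨hf1, hf2⟩ ⟨hg1, hg2⟩
    refine ⟨fun v => ?_, fun u v => ?_⟩
    · exact (hg1 v).trans (hf1 (g v))
    · exact (hf2 (g u) (g v)).trans (hg2 u v)
  inv_mem' := by
    rintro g ⟨hg1, hg2⟩
    refine ⟨fun v => ?_, fun u v => ?_⟩
    · have h := hg1 (g.symm v)
      have hv : g (g.symm v) = v := g.apply_symm_apply v
      rw [hv] at h
      exact h.symm
    · have h := hg2 (g.symm u) (g.symm v)
      have hu : g (g.symm u) = u := g.apply_symm_apply u
      have hv : g (g.symm v) = v := g.apply_symm_apply v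
      rw [hu, hv] at h
      exact h.symm

/-- The set of elements of `Aut(L)` acting as the `ω`-reflection in some root
belonging to `S`. -/
def ReflAutos (S : Set V) : Set (V ≃ₗ[ℂ] V) :=
  {g | g ∈ AutL ∧ ∃ r ∈ S, ∀ v, g v = reflMap ω r v}

/-- The reflection group `R(L)`: the subgroup of `Aut(L)` generated by the
`ω`-reflections in all roots of `L`. -/
def RL : Subgroup (V ≃ₗ[ℂ] V) := Subgroup.closure (ReflAutos {r | IsRoot r})

/-- Two roots are adjacent when `|⟨a,b⟩| = √3`, i.e. when their `ω`-reflections braid. -/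
def Adj (a b : V) : Prop := ‖herm a b‖ = Real.sqrt 3

/-- A set of roots is connected if the graph given by adjacency on it is connected. -/
def ConnectedSet (Φ : Set V) : Prop :=
  ∀ a ∈ Φ, ∀ b ∈ Φ, Relation.ReflTransGen (fun x y => x ∈ Φ ∧ y ∈ Φ ∧ Adj x y) a b

/-- `Rad Φ` is the radical of a set `Φ` of roots: the closure of `Φ` under reflecting
members of the set in each other (and identification of unit multiples). -/
inductive Rad (Φ : Set V) : V → Prop
  | base {r : V} : r ∈ Φ → Rad Φ r
  | refl {a b : V} : Rad Φ a → Rad Φ b → Rad Φ (reflMap ω a b)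
  | inv {a b : V} : Rad Φ a → Rad Φ b → Rad Φ (reflMap (conj ω) a b)
  | unit {u : ℂ} {r : V} : EisUnit u → Rad Φ r → Rad Φ (u • r)

/-- Shorthand for the entry `-θω²` occurring in the coordinates of the 26 roots. -/
def qc : ℂ := -(θ * ω ^ 2)

/- The 26 roots of the diagram `D` in the coordinate system `3E₈ ⊕ H`. -/

def rA : V := ![0, 0, 0, 0, 0, 0, 0, 0, 0, 0, 0, 0, 1, ω ^ 2]
def rC1 : V := ![qc, 0, 0, 0, 0, 0, 0, 0, 0, 0, 0, 0, 0, 0]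
def rC2 : V := ![0, 0, 0, 0, qc, 0, 0, 0, 0, 0, 0, 0, 0, 0]
def rC3 : V := ![0, 0, 0, 0, 0, 0, 0, 0, qc, 0, 0, 0, 0, 0]
def rE1 : V := ![0, qc, 0, 0, 0, 0, 0, 0, 0, 0, 0, 0, 0, 0]
def rE2 : V := ![0, 0, 0, 0, 0, qc, 0, 0, 0, 0, 0, 0, 0, 0]
def rE3 : V := ![0, 0, 0, 0, 0, 0, 0, 0, 0, qc, 0, 0, 0, 0]
def rA1 : V := ![0, 0, 0, 0, 0, 0, 0, qc, 0, 0, 0, qc, ω, ω ^ 2]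
def rA2 : V := ![0, 0, 0, qc, 0, 0, 0, 0, 0, 0, 0, qc, ω, ω ^ 2]
def rA3 : V := ![0, 0, 0, qc, 0, 0, 0, qc, 0, 0, 0, 0, ω, ω ^ 2]
def rG1 : V := ![0, 0, 0, qc, 0, 0, -qc, qc, 0, 0, -qc, qc, 2 * ω, 2 * ω ^ 2]
def rG2 : V := ![0, 0, -qc, qc, 0, 0, 0, qc, 0, 0, -qc, qc, 2 * ω, 2 * ω ^ 2]
def rG3 : V := ![0, 0, -qc, qc, 0, 0, -qc, qc, 0, 0, 0, qc, 2 * ω, 2 * ω ^ 2]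
def rF : V := ![0, 1, 1, -2, 0, 1, 1, -2, 0, 1, 1, -2, -2 + ω, -θ]
def rB1 : V := ![1, 0, 1, -1, 0, 0, 0, 0, 0, 0, 0, 0, -1, 0]
def rB2 : V := ![0, 0, 0, 0, 1, 0, 1, -1, 0, 0, 0, 0, -1, 0]
def rB3 : V := ![0, 0, 0, 0, 0, 0, 0, 0, 1, 0, 1, -1, -1, 0]
def rD1 : V := ![1, 1, -1, 0, 0, 0, 0, 0, 0, 0, 0, 0, 0, 0]
def rD2 : V := ![0, 0, 0, 0, 1, 1, -1, 0, 0, 0, 0, 0, 0, 0]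
def rD3 : V := ![0, 0, 0, 0, 0, 0, 0, 0, 1, 1, -1, 0, 0, 0]
def rF1 : V := ![0, 1, 1, 1, 0, 0, 0, 0, 0, 0, 0, 0, 0, 0]
def rF2 : V := ![0, 0, 0, 0, 0, 1, 1, 1, 0, 0, 0, 0, 0, 0]
def rF3 : V := ![0, 0, 0, 0, 0, 0, 0, 0, 0, 1, 1, 1, 0, 0]
def rZ1 : V := ![0, 1, 1, -2, 1, 0, 1, -1, 1, 0, 1, -1, qc, -θ]
def rZ2 : V := ![1, 0, 1, -1, 0, 1, 1, -2, 1, 0, 1, -1, qc, -θ]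
def rZ3 : V := ![1, 0, 1, -1, 1, 0, 1, -1, 0, 1, 1, -2, qc, -θ]

/-- The 13 roots of `D` labelled by the points of `P²(𝔽₃)`. -/
def pt : Fin 13 → V :=
  ![rA, rC1, rC2, rC3, rE1, rE2, rE3, rA1, rA2, rA3, rG1, rG2, rG3]

/-- The 13 roots of `D` labelled by the lines of `P²(𝔽₃)`. -/
def lnr : Fin 13 → V :=
  ![rF, rB1, rB2, rB3, rD1, rD2, rD3, rF1, rF2, rF3, rZ1, rZ2, rZ3]

/-- The 26 roots of the diagram `D` (the incidence graph of `P²(𝔽₃)`). -/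
def D26 : Set V := Set.range pt ∪ Set.range lnr

/-- The 16 roots forming the `M₆₆₆` diagram. -/
def M16 : Set V :=
  Set.range
    (![rA, rB1, rB2, rB3, rC1, rC2, rC3, rD1, rD2, rD3, rE1, rE2, rE3, rF1, rF2, rF3] :
      Fin 16 → V)

/-- The 26 vectors `(ρ₁,…,ρ₂₆) = (x₁,…,x₁₃, ξl₁,…,ξl₁₃)`. -/
def ρv : Fin 26 → V := fun i =>
  if h : (i : ℕ) < 13 then pt ⟨(i : ℕ), h⟩
  else ξ • lnr ⟨(i : ℕ) - 13, by have := i.isLt; omega⟩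

/-- The Weyl vector `ρ̄ = (Σ points + ξ Σ lines)/26`. -/
def ρbar : V := (26 : ℂ)⁻¹ • ((∑ i : Fin 13, pt i) + ξ • ∑ i : Fin 13, lnr i)

/-- The height of a root: `ht(r) = |⟨ρ̄, r⟩| / |ρ̄|²`. -/
def ht (r : V) : ℝ := ‖herm ρbar r‖ / ‖herm ρbar ρbar‖

/-- The subgroup `G ≅ PGL₃(𝔽₃)` of `Aut(L)`: automorphisms of `L` preserving the set
of 13 point roots and the set of 13 line roots of the diagram `D`. -/
def Gsub : Subgroup (V ≃ₗ[ℂ] V) where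
  carrier := {g | g ∈ AutL ∧ (⇑g) '' Set.range pt = Set.range pt ∧
    (⇑g) '' Set.range lnr = Set.range lnr}
  one_mem' := by
    refine ⟨one_mem AutL, ?_, ?_⟩ <;> simp
  mul_mem' := by
    rintro f g ⟨hf0, hf1, hf2⟩ ⟨hg0, hg1, hg2⟩
    refine ⟨mul_mem hf0 hg0, ?_, ?_⟩
    · have hco : (⇑(f * g)) = (⇑f) ∘ (⇑g) := rfl
      rw [hco, Set.image_comp, hg1, hf1]
    · have hco : (⇑(f * g)) = (⇑f) ∘ (⇑g) := rfl
      rw [hco, Set.image_comp, hg2, hf2]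
  inv_mem' := by
    rintro g ⟨hg0, hg1, hg2⟩
    refine ⟨inv_mem hg0, ?_, ?_⟩
    · conv_lhs => rw [← hg1]
      rw [← Set.image_comp]
      have : (⇑g⁻¹ ∘ ⇑g) = id := by
        funext x; exact g.symm_apply_apply x
      rw [this, Set.image_id]
    · conv_lhs => rw [← hg2]
      rw [← Set.image_comp]
      have : (⇑g⁻¹ ∘ ⇑g) = id := by
        funext x; exact g.symm_apply_apply x
      rw [this, Set.image_id]

/-- The defining properties of the automorphism `σ`: it is an automorphism of `L`
which, for the polarity `δ` of `P²(𝔽₃)` pairing each point `x = [a:b:c]` with the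
line `l = {aX+bY+cZ = 0}`, sends the point root `x` to `-ω·l` and the line root `l`
to `x`. -/
def SigmaSpec (σ : V ≃ₗ[ℂ] V) : Prop :=
  σ ∈ AutL ∧ ∃ δ : Fin 13 ≃ Fin 13,
    (∀ i j, Adj (pt i) (lnr (δ j)) ↔ Adj (pt j) (lnr (δ i))) ∧
    (∀ i, σ (pt i) = (-ω) • lnr (δ i)) ∧
    (∀ i, σ (lnr (δ i)) = pt i)

/-- The group `Q` generated by `G` and `σ`. -/
def QGroup (σ : V ≃ₗ[ℂ] V) : Subgroup (V ≃ₗ[ℂ] V) :=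
  Subgroup.closure ({σ} ∪ (Gsub : Set (V ≃ₗ[ℂ] V)))

open scoped Classical in
/-- For a line root `l`, the vector `w_𝒫 = ω²θl + Σ_{x ∈ l} x`. -/
def wPvec (l : V) : V :=
  (ω ^ 2 * θ) • l + ∑ i : Fin 13, if Adj (pt i) l then pt i else 0

open scoped Classical in
/-- For a point root `x`, the vector `w_ℒ = -ωθx + Σ_{l ∋ x} l`. -/
def wLvec (x : V) : V :=
  (-(ω * θ)) • x + ∑ i : Fin 13, if Adj x (lnr i) then lnr i else 0

open scoped Pointwise in
/-- The `ℰ`-span of a set of vectors (`ℰ = ℤ[ω]`, so this is the `ℤ`-span of the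
set together with its `ω`-multiples). -/
def EisSpan (S : Set V) : Set V :=
  (Submodule.span ℤ (S ∪ ω • S) : Submodule ℤ V)

/-!
The whole argument rests on three facts about the 26 roots. Their Gram matrix is `-3` on the
diagonal, `-ωθ` or its conjugate for an incident point and line, and `0` otherwise. Incidence is
that of a projective plane of order three, presented by the perfect difference set
`{0, 1, 3, 9} ⊆ ℤ/13`. Finally, since `L = θL'`, a vector lies in `L` if and only if its products
with all roots lie in `θℰ`.

The first two facts give `⟨x, w_𝒫⟩ = 0`, `⟨l, w_𝒫⟩ = ω²θ`, `⟨x, w_ℒ⟩ = -ωθ` and `⟨l, w_ℒ⟩ = 0` for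
all points `x` and lines `l`. Hence `w_𝒫` and the points form an orthogonal basis of `ℂ¹⁴`, a vector
is determined by its products with the roots, and `w_𝒫`, `w_ℒ` do not depend on choices. Permuting
this basis turns collineations into elements of `G`; in particular the Singer cycle
`n ↦ n + 1` of `ℤ/13` makes `G` transitive on points and on lines. So a vector is fixed by `G` iff
its products with the points are constant and those with the lines are constant, iff it is a
combination `a w_𝒫 + b w_ℒ`. By the third fact such a combination lies in `L` iff `a, b ∈ ℰ`.
-/

open QuadraticAlgebra (omega)

lemma image_range_eq_range_of_semiconj {ι E : Type*} {f : ι → E} {g : E → E} {σ : ι → ι}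
    (hσ : σ.Surjective) (h : ∀ i, g (f i) = f (σ i)) : g '' Set.range f = Set.range f := by
  rw [← Set.range_comp, show g ∘ f = f ∘ σ from funext h, hσ.range_comp]

lemma eq_zero_of_forall_basis_isOrtho {ι K E : Type*} [Field K] [AddCommGroup E] [Module K E]
    {I : K →+* K} {B : E →ₛₗ[I] E →ₗ[K] K} (b : Module.Basis ι K E) (hb : B.IsOrthoᵢ b)
    (hb' : ∀ i, B (b i) (b i) ≠ 0) {x : E} (hx : ∀ i, B (b i) x = 0) : x = 0 := by
  refine b.ext_elem fun i => ?_
  have hi : B (b i) x = b.repr x i * B (b i) (b i) := by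
    conv_lhs => rw [← b.linearCombination_repr x, Finsupp.linearCombination_apply, map_finsuppSum]
    rw [Finsupp.sum_eq_single i (fun k _ hki => by simp [hb hki.symm]) (by simp), map_smul,
      smul_eq_mul]
  simpa using (mul_eq_zero.1 (hi.symm.trans (hx i))).resolve_right (hb' i)

lemma comp_vecCons {α β : Type*} {n : ℕ} (f : α → β) (a : α) (v : Fin n → α) :
    f ∘ Matrix.vecCons a v = Matrix.vecCons (f a) (f ∘ v) :=
  Fin.comp_cons f a v

lemma comp_vecEmpty {α β : Type*} (f : α → β) : f ∘ (![] : Fin 0 → α) = ![] :=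
  Subsingleton.elim _ _

/-! ### Eisenstein integers -/

lemma isPrimitiveRoot_ω : IsPrimitiveRoot ω 3 := by
  simpa [ω] using Complex.isPrimitiveRoot_exp 3 (by norm_num)

lemma ω_ne_zero : ω ≠ 0 := isPrimitiveRoot_ω.ne_zero (by norm_num)

lemma ω_cube : ω ^ 3 = 1 := isPrimitiveRoot_ω.pow_eq_one

lemma ω_sq : ω ^ 2 = -1 - ω := by
  have h := isPrimitiveRoot_ω.geom_sum_eq_zero (by norm_num)
  simp only [Finset.sum_range_succ, Finset.sum_range_zero] at h
  linear_combination h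

lemma conj_ω : conj ω = ω ^ 2 := by
  rw [← Complex.inv_eq_conj (isPrimitiveRoot_ω.norm'_eq_one (by norm_num))]
  exact inv_eq_of_mul_eq_one_right (by linear_combination ω_cube)

lemma θ_eq : θ = 1 + 2 * ω := by
  rw [θ, conj_ω, ω_sq]; ring

lemma θ_sq : θ ^ 2 = -3 := by
  rw [θ_eq]; linear_combination 4 * ω_sq

lemma θ_ne_zero : θ ≠ 0 := by
  intro h
  simpa [h] using θ_sq

lemma conj_θ : conj θ = -θ := by
  simp [θ]

lemma conj_neg_ω_mul_θ : conj (-(ω * θ)) = ω ^ 2 * θ := by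
  simp [conj_ω, conj_θ]

lemma ω_sq_mul_θ_mul_neg_ω_mul_θ : ω ^ 2 * θ * -(ω * θ) = 3 := by
  linear_combination -θ ^ 2 * ω_cube - θ_sq

lemma qc_eq : qc = -1 + ω := by
  rw [qc, θ_eq]; linear_combination (-1 - 2 * ω) * ω_sq + 2 * ω_sq

lemma conj_qc : conj qc = θ * ω := by
  simp only [qc, map_neg, map_mul, map_pow, conj_θ, conj_ω]
  linear_combination θ * ω * ω_cube

/-- The ring `ℤ[ω]` in the basis `1, ω`: a copy of the Eisenstein integers in which
identities can be decided by computation. -/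
abbrev EisensteinInt : Type := QuadraticAlgebra ℤ (-1) (-1)

/-- The inclusion `ℤ[ω] → ℂ`. -/
def toComplex : EisensteinInt →+* ℂ :=
  (QuadraticAlgebra.lift ⟨ω, by linear_combination ω_sq⟩ : EisensteinInt →ₐ[ℤ] ℂ)

lemma toComplex_apply (z : EisensteinInt) : toComplex z = z.re + z.im * ω := by
  simp [toComplex, QuadraticAlgebra.lift]

lemma toComplex_omega : toComplex omega = ω := by
  simp [toComplex_apply]

lemma toComplex_star (z : EisensteinInt) : toComplex (star z) = conj (toComplex z) := by
  simp only [toComplex_apply, map_add, map_mul, map_intCast, conj_ω, ω_sq,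
    QuadraticAlgebra.re_star, QuadraticAlgebra.im_star]
  push_cast
  ring

/-- The Eisenstein integers as a subring of `ℂ`. -/
def ℰ : Subring ℂ := toComplex.range

/-- The prime ideal `θℰ` of `ℰ` above `3`, as an `ℰ`-submodule of `ℂ`. -/
def θℰ : Submodule ℰ ℂ := Submodule.span ℰ {θ}

lemma mem_ℰ_iff {z : ℂ} : z ∈ ℰ ↔ EisP z := by
  constructor
  · rintro ⟨e, rfl⟩
    exact ⟨e.re, e.im, toComplex_apply e⟩
  · rintro ⟨a, b, rfl⟩
    exact ⟨⟨a, b⟩, toComplex_apply _⟩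

lemma ω_mem_ℰ : ω ∈ ℰ := ⟨omega, toComplex_omega⟩

lemma conj_mem_ℰ {z : ℂ} (hz : z ∈ ℰ) : conj z ∈ ℰ := by
  obtain ⟨e, rfl⟩ := hz
  exact ⟨star e, toComplex_star e⟩

lemma θ_mem_ℰ : θ ∈ ℰ := ℰ.sub_mem ω_mem_ℰ (conj_mem_ℰ ω_mem_ℰ)

lemma ω_mul_mem_ℰ_iff {z : ℂ} : ω * z ∈ ℰ ↔ z ∈ ℰ := by
  refine ⟨fun h => ?_, ℰ.mul_mem ω_mem_ℰ⟩
  have hz : z = ω ^ 2 * (ω * z) := by linear_combination -z * ω_cube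
  exact hz ▸ ℰ.mul_mem (ℰ.pow_mem ω_mem_ℰ 2) h

lemma mem_θℰ_iff {z : ℂ} : z ∈ θℰ ↔ ∃ e ∈ ℰ, z = θ * e := by
  simp [θℰ, Submodule.mem_span_singleton, Subring.smul_def, mul_comm θ, eq_comm]

lemma θ_mul_mem_θℰ_iff {z : ℂ} : θ * z ∈ θℰ ↔ z ∈ ℰ := by
  simp [mem_θℰ_iff, θ_ne_zero]

lemma mul_mem_θℰ {e z : ℂ} (he : e ∈ ℰ) (hz : z ∈ θℰ) : e * z ∈ θℰ :=
  θℰ.smul_mem (⟨e, he⟩ : ℰ) hz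

lemma conj_mem_θℰ {z : ℂ} (hz : z ∈ θℰ) : conj z ∈ θℰ := by
  obtain ⟨e, he, rfl⟩ := mem_θℰ_iff.1 hz
  rw [map_mul, conj_θ, neg_mul, ← mul_neg, θ_mul_mem_θℰ_iff]
  exact ℰ.neg_mem (conj_mem_ℰ he)

lemma three_mul_mem_θℰ {z : ℂ} (hz : z ∈ ℰ) : 3 * z ∈ θℰ := by
  have h : 3 * z = θ * (-θ * z) := by linear_combination z * θ_sq
  rw [h, θ_mul_mem_θℰ_iff]
  exact ℰ.mul_mem (ℰ.neg_mem θ_mem_ℰ) hz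

lemma mul_neg_ω_mul_θ_mem_θℰ_iff {c : ℂ} : c * -(ω * θ) ∈ θℰ ↔ c ∈ ℰ := by
  have h : c * -(ω * θ) = -(θ * (ω * c)) := by ring
  rw [h, neg_mem_iff, θ_mul_mem_θℰ_iff, ω_mul_mem_ℰ_iff]

lemma mul_ω_sq_mul_θ_mem_θℰ_iff {c : ℂ} : c * (ω ^ 2 * θ) ∈ θℰ ↔ c ∈ ℰ := by
  have h : c * (ω ^ 2 * θ) = θ * (ω * (ω * c)) := by ring
  rw [h, θ_mul_mem_θℰ_iff, ω_mul_mem_ℰ_iff, ω_mul_mem_ℰ_iff]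

lemma neg_ω_mul_θ_mem_θℰ : -(ω * θ) ∈ θℰ := by
  simpa using mul_neg_ω_mul_θ_mem_θℰ_iff.2 ℰ.one_mem

lemma ω_sq_mul_θ_mem_θℰ : ω ^ 2 * θ ∈ θℰ := by
  simpa using mul_ω_sq_mul_θ_mem_θℰ_iff.2 ℰ.one_mem

lemma neg_three_mem_θℰ : (-3 : ℂ) ∈ θℰ := by
  simpa using θℰ.neg_mem (three_mul_mem_θℰ ℰ.one_mem)

lemma exists_int_sub_mem_θℰ {z : ℂ} (hz : z ∈ ℰ) : ∃ n : ℤ, z - n ∈ θℰ := by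
  obtain ⟨a, b, rfl⟩ := mem_ℰ_iff.1 hz
  refine ⟨a + b, ?_⟩
  have h : (a : ℂ) + b * ω - (a + b : ℤ) = θ * (-(b * ω ^ 2)) := by
    push_cast
    rw [θ_eq]
    linear_combination (b * (2 * ω - 1) : ℂ) * ω_sq
  rw [h, θ_mul_mem_θℰ_iff]
  exact ℰ.neg_mem (ℰ.mul_mem (intCast_mem ℰ b) (ℰ.pow_mem ω_mem_ℰ 2))

lemma mem_ℰ_of_mem_θℰ {z : ℂ} (hz : z ∈ θℰ) : z ∈ ℰ := by
  obtain ⟨e, he, rfl⟩ := mem_θℰ_iff.1 hz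
  exact ℰ.mul_mem θ_mem_ℰ he

lemma mem_θℰ_iff_exists_int {z : ℂ} : z ∈ θℰ ↔ ∃ a b : ℤ, z = θ * (a + b * ω) := by
  simp only [mem_θℰ_iff, mem_ℰ_iff, EisP]
  constructor
  · rintro ⟨_, ⟨a, b, rfl⟩, rfl⟩
    exact ⟨a, b, rfl⟩
  · rintro ⟨a, b, rfl⟩
    exact ⟨_, ⟨a, b, rfl⟩, rfl⟩

open scoped Pointwise in
lemma EisSpan_eq_span (S : Set V) : EisSpan S = Submodule.span ℰ S := by
  refine Set.Subset.antisymm ?_ fun v hv => ?_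
  · have h : Submodule.span ℤ (S ∪ ω • S) ≤ (Submodule.span ℰ S).restrictScalars ℤ := by
      rw [Submodule.span_le]
      rintro _ (hx | ⟨x, hx, rfl⟩)
      · exact Submodule.subset_span hx
      · exact Submodule.smul_mem _ (⟨ω, ω_mem_ℰ⟩ : ℰ) (Submodule.subset_span hx)
    exact h
  · induction hv using Submodule.closure_induction with
    | zero => exact Submodule.zero_mem _
    | add x y _ _ hx hy => exact Submodule.add_mem _ hx hy
    | smul_mem c x hx =>
      obtain ⟨a, b, hc⟩ := mem_ℰ_iff.1 c.2
      have hcx : c • x = a • x + b • (ω • x) := by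
        rw [Subring.smul_def, hc, add_smul, mul_smul, Int.cast_smul_eq_zsmul,
          Int.cast_smul_eq_zsmul]
      rw [hcx]
      exact Submodule.add_mem _ (Submodule.smul_mem _ a (Submodule.subset_span (.inl hx)))
        (Submodule.smul_mem _ b (Submodule.subset_span (.inr ⟨x, hx, rfl⟩)))

/-! ### The lattice and its pairing -/

/-- The Hermitian form `herm` as a sesquilinear map. -/
def hermForm : V →ₗ⋆[ℂ] V →ₗ[ℂ] ℂ :=
  LinearMap.mk₂'ₛₗ (starRingEnd ℂ) (RingHom.id ℂ) herm
    (fun u u' v => by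
      simp only [herm, Pi.add_apply, map_add, add_mul, Finset.sum_add_distrib]; ring)
    (fun c u v => by
      simp only [herm, Pi.smul_apply, smul_eq_mul, map_mul, mul_assoc, ← Finset.mul_sum]; ring)
    (fun u v v' => by
      simp only [herm, Pi.add_apply, mul_add, Finset.sum_add_distrib]; ring)
    (fun c u v => by
      simp only [herm, Pi.smul_apply, smul_eq_mul, RingHom.id_apply, mul_left_comm _ c,
        ← Finset.mul_sum]; ring)

lemma hermForm_apply (u v : V) : hermForm u v = herm u v := rfl

lemma conj_herm (u v : V) : conj (herm u v) = herm v u := by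
  simp only [herm, map_add, map_neg, map_sum, map_mul, Complex.conj_conj, mul_comm]
  ring

lemma inE8_iff_congruences {w : Fin 4 → ℂ} : inE8 w ↔ (∀ i, w i ∈ ℰ) ∧ ∃ s t : ℤ,
    w 0 - s ∈ θℰ ∧ w 1 - (s + t) ∈ θℰ ∧ w 2 - (-s + t) ∈ θℰ ∧ w 3 - t ∈ θℰ := by
  simp [inE8, mem_ℰ_iff, ← mem_θℰ_iff_exists_int, Fin.forall_fin_succ, tet1, tet2]

lemma inE8_iff_parity {w : Fin 4 → ℂ} : inE8 w ↔
    (w 0 ∈ ℰ ∧ w 1 ∈ ℰ) ∧ w 0 + w 1 - w 2 ∈ θℰ ∧ w 1 + w 2 + w 3 ∈ θℰ := by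
  rw [inE8_iff_congruences]
  constructor
  · rintro ⟨hw, s, t, h0, h1, h2, h3⟩
    refine ⟨⟨hw 0, hw 1⟩, ?_, ?_⟩
    · convert θℰ.add_mem (θℰ.sub_mem (θℰ.add_mem h0 h1) h2)
        (three_mul_mem_θℰ (intCast_mem ℰ s)) using 1
      ring
    · convert θℰ.add_mem (θℰ.add_mem (θℰ.add_mem h1 h2) h3)
        (three_mul_mem_θℰ (intCast_mem ℰ t)) using 1
      ring
  · rintro ⟨⟨hw0, hw1⟩, hP, hQ⟩
    have hw2 : w 2 ∈ ℰ := by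
      simpa using ℰ.sub_mem (ℰ.add_mem hw0 hw1) (mem_ℰ_of_mem_θℰ hP)
    have hw3 : w 3 ∈ ℰ := by
      convert ℰ.sub_mem (mem_ℰ_of_mem_θℰ hQ) (ℰ.add_mem hw1 hw2) using 1
      ring
    obtain ⟨s, h0⟩ := exists_int_sub_mem_θℰ hw0
    obtain ⟨t, h1⟩ := exists_int_sub_mem_θℰ (ℰ.sub_mem hw1 (intCast_mem ℰ s))
    rw [sub_sub] at h1
    have h2 : w 2 - (-s + t) ∈ θℰ := by
      convert θℰ.add_mem (θℰ.sub_mem (θℰ.add_mem h0 h1) hP)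
        (three_mul_mem_θℰ (intCast_mem ℰ s)) using 1
      ring
    have h3 : w 3 - t ∈ θℰ := by
      convert θℰ.sub_mem (θℰ.sub_mem (θℰ.sub_mem hQ h1) h2)
        (three_mul_mem_θℰ (intCast_mem ℰ t)) using 1
      ring
    exact ⟨fun i => by fin_cases i <;> assumption, s, t, h0, h1, h2, h3⟩

/-- The component of a vector of `ℂ¹⁴` in the `k`-th copy of `E₈`. -/
def block (v : V) (k : Fin 3) (i : Fin 4) : ℂ := v ⟨4 * (k : ℕ) + (i : ℕ), by omega⟩

lemma mem_Lset_iff {v : V} : v ∈ Lset ↔ (∀ k, inE8 (block v k)) ∧ v 12 ∈ ℰ ∧ v 13 ∈ ℰ := by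
  simp only [mem_ℰ_iff]
  rfl

lemma herm_eq_sum_block (u v : V) : herm u v =
    -(∑ k, ∑ i, conj (block u k i) * block v k i) +
      conj (u 12) * conj θ * v 13 + conj (u 13) * θ * v 12 := by
  rw [herm, ← Finset.sum_product', Finset.univ_product_univ,
    ← (finProdFinEquiv (m := 3) (n := 4)).sum_comp]
  simp [block, finProdFinEquiv, Fin.castLE, add_comm]

lemma add_sub_mem_θℰ {u : Fin 4 → ℂ} (hu : inE8 u) : u 0 + u 2 - u 3 ∈ θℰ := by
  obtain ⟨-, hP, hQ⟩ := inE8_iff_parity.1 hu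
  convert θℰ.add_mem (θℰ.sub_mem hP hQ)
    (three_mul_mem_θℰ ((inE8_iff_congruences.1 hu).1 2)) using 1
  ring

lemma sum_conj_mul_mem_θℰ {u w : Fin 4 → ℂ} (hu : inE8 u) (hw : inE8 w) :
    ∑ i, conj (u i) * w i ∈ θℰ := by
  have hu2 := (inE8_iff_congruences.1 hu).1 2
  have hu3 := (inE8_iff_congruences.1 hu).1 3
  obtain ⟨-, -, hQu⟩ := inE8_iff_parity.1 hu
  obtain ⟨⟨hw0, hw1⟩, hPw, hQw⟩ := inE8_iff_parity.1 hw
  have hw013 : w 0 - w 1 + w 3 ∈ θℰ := by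
    convert θℰ.sub_mem (θℰ.add_mem hPw hQw) (three_mul_mem_θℰ hw1) using 1
    ring
  have h : ∑ i, conj (u i) * w i = w 0 * conj (u 0 + u 2 - u 3) + w 1 * conj (u 1 + u 2 + u 3)
      - conj (u 2) * (w 0 + w 1 - w 2) + conj (u 3) * (w 0 - w 1 + w 3) := by
    simp only [Fin.sum_univ_four, map_add, map_sub]
    ring
  rw [h]
  exact θℰ.add_mem (θℰ.sub_mem (θℰ.add_mem (mul_mem_θℰ hw0 (conj_mem_θℰ (add_sub_mem_θℰ hu)))
    (mul_mem_θℰ hw1 (conj_mem_θℰ hQu))) (mul_mem_θℰ (conj_mem_ℰ hu2) hPw))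
    (mul_mem_θℰ (conj_mem_ℰ hu3) hw013)

lemma herm_mem_θℰ {u v : V} (hu : u ∈ Lset) (hv : v ∈ Lset) : herm u v ∈ θℰ := by
  obtain ⟨hub, hu12, hu13⟩ := mem_Lset_iff.1 hu
  obtain ⟨hvb, hv12, hv13⟩ := mem_Lset_iff.1 hv
  have hH : conj (u 12) * conj θ * v 13 + conj (u 13) * θ * v 12 =
      θ * (conj (u 13) * v 12 - conj (u 12) * v 13) := by
    rw [conj_θ]; ring
  rw [herm_eq_sum_block, add_assoc, hH]
  refine θℰ.add_mem (θℰ.neg_mem (θℰ.sum_mem fun k _ => sum_conj_mul_mem_θℰ (hub k) (hvb k))) ?_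
  exact θ_mul_mem_θℰ_iff.2
    (ℰ.sub_mem (ℰ.mul_mem (conj_mem_ℰ hu13) hv12) (ℰ.mul_mem (conj_mem_ℰ hu12) hv13))

lemma herm_rA (v : V) : herm rA v = θ * (ω * v 12 - v 13) := by
  simp [herm, rA, Fin.sum_univ_succ, conj_θ, ← conj_ω, sub_eq_neg_add, mul_add, mul_comm ω,
    mul_assoc]

lemma herm_rB1 (v : V) :
    herm rB1 v = -(block v 0 0 + block v 0 2 - block v 0 3) + θ * v 13 := by
  simp [herm, rB1, Fin.sum_univ_succ, block, conj_θ, sub_eq_add_neg, add_assoc]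

lemma herm_rC (k : Fin 3) (v : V) : herm (![rC1, rC2, rC3] k) v = -(θ * (ω * block v k 0)) := by
  fin_cases k <;> simp [herm, rC1, rC2, rC3, Fin.sum_univ_succ, block, conj_qc, mul_assoc]

lemma herm_rE (k : Fin 3) (v : V) : herm (![rE1, rE2, rE3] k) v = -(θ * (ω * block v k 1)) := by
  fin_cases k <;> simp [herm, rE1, rE2, rE3, Fin.sum_univ_succ, block, conj_qc, mul_assoc]

lemma herm_rD (k : Fin 3) (v : V) :
    herm (![rD1, rD2, rD3] k) v = -(block v k 0 + block v k 1 - block v k 2) := by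
  fin_cases k <;> simp [herm, rD1, rD2, rD3, Fin.sum_univ_succ, block, sub_eq_add_neg, add_assoc]

lemma herm_rF (k : Fin 3) (v : V) :
    herm (![rF1, rF2, rF3] k) v = -(block v k 1 + block v k 2 + block v k 3) := by
  fin_cases k <;> simp [herm, rF1, rF2, rF3, Fin.sum_univ_succ, block, add_assoc]

lemma inE8_block_of_forall_herm {v : V} (h : ∀ r ∈ D26, herm r v ∈ θℰ) (k : Fin 3) :
    inE8 (block v k) := by
  have hC : herm (![rC1, rC2, rC3] k) v ∈ θℰ :=
    h _ (.inl ⟨![1, 2, 3] k, by fin_cases k <;> rfl⟩)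
  have hE : herm (![rE1, rE2, rE3] k) v ∈ θℰ :=
    h _ (.inl ⟨![4, 5, 6] k, by fin_cases k <;> rfl⟩)
  have hD : herm (![rD1, rD2, rD3] k) v ∈ θℰ :=
    h _ (.inr ⟨![4, 5, 6] k, by fin_cases k <;> rfl⟩)
  have hF : herm (![rF1, rF2, rF3] k) v ∈ θℰ :=
    h _ (.inr ⟨![7, 8, 9] k, by fin_cases k <;> rfl⟩)
  rw [herm_rC, neg_mem_iff, θ_mul_mem_θℰ_iff, ω_mul_mem_ℰ_iff] at hC
  rw [herm_rE, neg_mem_iff, θ_mul_mem_θℰ_iff, ω_mul_mem_ℰ_iff] at hE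
  rw [herm_rD, neg_mem_iff] at hD
  rw [herm_rF, neg_mem_iff] at hF
  exact inE8_iff_parity.2 ⟨⟨hC, hE⟩, hD, hF⟩

lemma mem_Lset_of_forall_herm {v : V} (h : ∀ r ∈ D26, herm r v ∈ θℰ) : v ∈ Lset := by
  have hblock := inE8_block_of_forall_herm h
  have hA := h rA (.inl ⟨0, rfl⟩)
  have hB := h rB1 (.inr ⟨1, rfl⟩)
  have h023 := add_sub_mem_θℰ (hblock 0)
  have h13 : v 13 ∈ ℰ := by
    rwa [herm_rB1, Submodule.add_mem_iff_right _ (θℰ.neg_mem h023), θ_mul_mem_θℰ_iff] at hB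
  have h12 : v 12 ∈ ℰ := by
    rw [herm_rA, θ_mul_mem_θℰ_iff] at hA
    exact ω_mul_mem_ℰ_iff.1 (by simpa using ℰ.add_mem hA h13)
  exact mem_Lset_iff.2 ⟨hblock, h12, h13⟩

/-! ### The incidence structure -/

/-- Labels of the points of `P²(𝔽₃)` along a Singer cycle, listed in the order of `pt`. -/
def pointLabel : Fin 13 → ZMod 13 := ![0, 5, 10, 2, 1, 3, 9, 4, 11, 12, 7, 6, 8]

/-- Labels of the lines of `P²(𝔽₃)` along a Singer cycle, listed in the order of `lnr`. -/
def lineLabel : Fin 13 → ZMod 13 := ![0, 4, 10, 12, 5, 7, 6, 11, 3, 8, 1, 2, 9]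

/-- The incidence relation of `P²(𝔽₃)`, developed from the perfect difference set
`{0, 1, 3, 9} ⊆ ℤ/13`. -/
def Incident (i j : Fin 13) : Prop :=
  pointLabel i - lineLabel j ∈ ({0, 1, 3, 9} : Finset (ZMod 13))

instance : DecidableRel Incident := fun _ _ => Finset.decidableMem _ _

/-- The bijection of the points of `P²(𝔽₃)` with `ℤ/13`. -/
def pointLabelEquiv : Fin 13 ≃ ZMod 13 := Equiv.ofBijective pointLabel (by decide)

/-- The bijection of the lines of `P²(𝔽₃)` with `ℤ/13`. -/
def lineLabelEquiv : Fin 13 ≃ ZMod 13 := Equiv.ofBijective lineLabel (by decide)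

/-- The `t`-th power of the Singer cycle, on points. -/
def shiftPoints (t : ZMod 13) : Equiv.Perm (Fin 13) :=
  pointLabelEquiv.symm.permCongr (Equiv.addRight t)

/-- The `t`-th power of the Singer cycle, on lines. -/
def shiftLines (t : ZMod 13) : Equiv.Perm (Fin 13) :=
  lineLabelEquiv.symm.permCongr (Equiv.addRight t)

lemma pointLabel_shiftPoints (t : ZMod 13) (i : Fin 13) :
    pointLabel (shiftPoints t i) = pointLabel i + t :=
  pointLabelEquiv.apply_symm_apply _

lemma lineLabel_shiftLines (t : ZMod 13) (j : Fin 13) :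
    lineLabel (shiftLines t j) = lineLabel j + t :=
  lineLabelEquiv.apply_symm_apply _

lemma incident_shift_iff (t : ZMod 13) (i j : Fin 13) :
    Incident (shiftPoints t i) (shiftLines t j) ↔ Incident i j := by
  rw [Incident, pointLabel_shiftPoints, lineLabel_shiftLines, add_sub_add_right_eq_sub, Incident]

lemma shiftPoints_sub_apply (i k : Fin 13) :
    shiftPoints (pointLabel k - pointLabel i) i = k :=
  pointLabelEquiv.injective ((pointLabel_shiftPoints _ i).trans (add_sub_cancel _ _))

lemma shiftLines_sub_apply (j k : Fin 13) : shiftLines (lineLabel k - lineLabel j) j = k :=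
  lineLabelEquiv.injective ((lineLabel_shiftLines _ j).trans (add_sub_cancel _ _))

lemma card_points_on_two_lines (j k : Fin 13) :
    ({i | Incident i j ∧ Incident i k} : Finset (Fin 13)).card =
      if j = k then 4 else 1 := by
  revert j k
  decide +kernel

lemma card_lines_through_two_points (i k : Fin 13) :
    ({j | Incident i j ∧ Incident k j} : Finset (Fin 13)).card =
      if i = k then 4 else 1 := by
  revert i k
  decide +kernel

/-! ### The Gram matrix of the roots -/

/-- `θ` as an element of the computable ring `ℤ[ω]`. -/
def thetaE : EisensteinInt := 1 + 2 * omega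

/-- `qc = -θω²` as an element of the computable ring `ℤ[ω]`. -/
def qE : EisensteinInt := -1 + omega

lemma toComplex_two : toComplex 2 = 2 := map_ofNat _ _

lemma toComplex_thetaE : toComplex thetaE = θ := by
  rw [thetaE, θ_eq, map_add, map_mul, toComplex_omega, map_one, toComplex_two]

lemma toComplex_qE : toComplex qE = qc := by
  rw [qE, qc_eq, map_add, map_neg, map_one, toComplex_omega]

/-- The coordinates of the point roots over `ℤ[ω]`. -/
def pointCoords : Fin 13 → Fin 14 → EisensteinInt :=
  ![![0, 0, 0, 0, 0, 0, 0, 0, 0, 0, 0, 0, 1, omega ^ 2],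
    ![qE, 0, 0, 0, 0, 0, 0, 0, 0, 0, 0, 0, 0, 0],
    ![0, 0, 0, 0, qE, 0, 0, 0, 0, 0, 0, 0, 0, 0],
    ![0, 0, 0, 0, 0, 0, 0, 0, qE, 0, 0, 0, 0, 0],
    ![0, qE, 0, 0, 0, 0, 0, 0, 0, 0, 0, 0, 0, 0],
    ![0, 0, 0, 0, 0, qE, 0, 0, 0, 0, 0, 0, 0, 0],
    ![0, 0, 0, 0, 0, 0, 0, 0, 0, qE, 0, 0, 0, 0],
    ![0, 0, 0, 0, 0, 0, 0, qE, 0, 0, 0, qE, omega, omega ^ 2],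
    ![0, 0, 0, qE, 0, 0, 0, 0, 0, 0, 0, qE, omega, omega ^ 2],
    ![0, 0, 0, qE, 0, 0, 0, qE, 0, 0, 0, 0, omega, omega ^ 2],
    ![0, 0, 0, qE, 0, 0, -qE, qE, 0, 0, -qE, qE, 2 * omega, 2 * omega ^ 2],
    ![0, 0, -qE, qE, 0, 0, 0, qE, 0, 0, -qE, qE, 2 * omega, 2 * omega ^ 2],
    ![0, 0, -qE, qE, 0, 0, -qE, qE, 0, 0, 0, qE, 2 * omega, 2 * omega ^ 2]]

/-- The coordinates of the line roots over `ℤ[ω]`. -/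
def lineCoords : Fin 13 → Fin 14 → EisensteinInt :=
  ![![0, 1, 1, -2, 0, 1, 1, -2, 0, 1, 1, -2, -2 + omega, -thetaE],
    ![1, 0, 1, -1, 0, 0, 0, 0, 0, 0, 0, 0, -1, 0],
    ![0, 0, 0, 0, 1, 0, 1, -1, 0, 0, 0, 0, -1, 0],
    ![0, 0, 0, 0, 0, 0, 0, 0, 1, 0, 1, -1, -1, 0],
    ![1, 1, -1, 0, 0, 0, 0, 0, 0, 0, 0, 0, 0, 0],
    ![0, 0, 0, 0, 1, 1, -1, 0, 0, 0, 0, 0, 0, 0],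
    ![0, 0, 0, 0, 0, 0, 0, 0, 1, 1, -1, 0, 0, 0],
    ![0, 1, 1, 1, 0, 0, 0, 0, 0, 0, 0, 0, 0, 0],
    ![0, 0, 0, 0, 0, 1, 1, 1, 0, 0, 0, 0, 0, 0],
    ![0, 0, 0, 0, 0, 0, 0, 0, 0, 1, 1, 1, 0, 0],
    ![0, 1, 1, -2, 1, 0, 1, -1, 1, 0, 1, -1, qE, -thetaE],
    ![1, 0, 1, -1, 0, 1, 1, -2, 1, 0, 1, -1, qE, -thetaE],
    ![1, 0, 1, -1, 1, 0, 1, -1, 0, 1, 1, -2, qE, -thetaE]]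

lemma pt_eq_toComplex_comp (i : Fin 13) : pt i = toComplex ∘ pointCoords i := by
  fin_cases i <;>
    simp [pt, pointCoords, rA, rC1, rC2, rC3, rE1, rE2, rE3, rA1, rA2, rA3, rG1, rG2, rG3,
      comp_vecCons, comp_vecEmpty, toComplex_omega, toComplex_qE, toComplex_two]

lemma lnr_eq_toComplex_comp (j : Fin 13) : lnr j = toComplex ∘ lineCoords j := by
  fin_cases j <;>
    simp [lnr, lineCoords, rF, rB1, rB2, rB3, rD1, rD2, rD3, rF1, rF2, rF3, rZ1, rZ2, rZ3,
      comp_vecCons, comp_vecEmpty, toComplex_omega, toComplex_qE, toComplex_thetaE,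
      toComplex_two]

/-- The Hermitian form `herm` on vectors with coordinates in `ℤ[ω]`. -/
def hermE (u v : Fin 14 → EisensteinInt) : EisensteinInt :=
  -(∑ i : Fin 12, star (u (Fin.castLE (by norm_num) i)) * v (Fin.castLE (by norm_num) i)) +
    star (u 12) * star thetaE * v 13 + star (u 13) * thetaE * v 12

lemma herm_toComplex_comp (u v : Fin 14 → EisensteinInt) :
    herm (toComplex ∘ u) (toComplex ∘ v) = toComplex (hermE u v) := by
  simp [herm, hermE, toComplex_star, toComplex_thetaE]

lemma hermE_pointCoords (i j : Fin 13) :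
    hermE (pointCoords i) (pointCoords j) = if i = j then -3 else 0 := by
  revert i j
  decide +kernel

lemma hermE_lineCoords (i j : Fin 13) :
    hermE (lineCoords i) (lineCoords j) = if i = j then -3 else 0 := by
  revert i j
  decide +kernel

lemma hermE_pointCoords_lineCoords (i j : Fin 13) :
    hermE (pointCoords i) (lineCoords j) = if Incident i j then -(omega * thetaE) else 0 := by
  revert i j
  decide +kernel

lemma herm_pt_pt (i j : Fin 13) : herm (pt i) (pt j) = if i = j then -3 else 0 := by
  rw [pt_eq_toComplex_comp, pt_eq_toComplex_comp, herm_toComplex_comp, hermE_pointCoords,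
    apply_ite toComplex, map_neg, map_ofNat, map_zero]

lemma herm_lnr_lnr (i j : Fin 13) : herm (lnr i) (lnr j) = if i = j then -3 else 0 := by
  rw [lnr_eq_toComplex_comp, lnr_eq_toComplex_comp, herm_toComplex_comp, hermE_lineCoords,
    apply_ite toComplex, map_neg, map_ofNat, map_zero]

lemma herm_pt_lnr (i j : Fin 13) :
    herm (pt i) (lnr j) = if Incident i j then -(ω * θ) else 0 := by
  rw [pt_eq_toComplex_comp, lnr_eq_toComplex_comp, herm_toComplex_comp,
    hermE_pointCoords_lineCoords, apply_ite toComplex, map_neg, map_mul, toComplex_omega,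
    toComplex_thetaE, map_zero]

lemma herm_lnr_pt (j i : Fin 13) :
    herm (lnr j) (pt i) = if Incident i j then ω ^ 2 * θ else 0 := by
  rw [← conj_herm, herm_pt_lnr, apply_ite conj, conj_neg_ω_mul_θ, map_zero]

lemma adj_pt_lnr_iff (i j : Fin 13) : Adj (pt i) (lnr j) ↔ Incident i j := by
  have hnorm : ‖-(ω * θ)‖ = √3 := by
    rw [eq_comm, Real.sqrt_eq_iff_mul_self_eq (by norm_num) (norm_nonneg _), ← pow_two,
      ← norm_pow, neg_sq, mul_pow, θ_sq, norm_mul, norm_pow,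
      isPrimitiveRoot_ω.norm'_eq_one (by norm_num)]
    norm_num
  rw [Adj, herm_pt_lnr]
  split_ifs with h
  · simp [h, hnorm]
  · simpa [h] using (Real.sqrt_pos.2 three_pos).ne

lemma D26_subset_Lset : D26 ⊆ Lset := by
  have hite {P : Prop} [Decidable P] {c : ℂ} (hc : c ∈ θℰ) : (if P then c else 0) ∈ θℰ := by
    split_ifs
    exacts [hc, θℰ.zero_mem]
  rintro _ (⟨i, rfl⟩ | ⟨j, rfl⟩) <;> refine mem_Lset_of_forall_herm ?_ <;>
    rintro _ (⟨k, rfl⟩ | ⟨k, rfl⟩)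
  · exact herm_pt_pt k i ▸ hite neg_three_mem_θℰ
  · exact herm_lnr_pt k i ▸ hite ω_sq_mul_θ_mem_θℰ
  · exact herm_pt_lnr k j ▸ hite neg_ω_mul_θ_mem_θℰ
  · exact herm_lnr_lnr k j ▸ hite neg_three_mem_θℰ

lemma mem_Lset_iff_forall_herm {v : V} : v ∈ Lset ↔ ∀ r ∈ D26, herm r v ∈ θℰ :=
  ⟨fun hv _ hr => herm_mem_θℰ (D26_subset_Lset hr) hv, mem_Lset_of_forall_herm⟩

/-! ### The vectors w_𝒫 and w_ℒ -/

lemma wPvec_lnr (j : Fin 13) :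
    wPvec (lnr j) = (ω ^ 2 * θ) • lnr j + ∑ i with Incident i j, pt i := by
  simp only [wPvec, adj_pt_lnr_iff, Finset.sum_filter]

lemma wLvec_pt (i : Fin 13) :
    wLvec (pt i) = (-(ω * θ)) • pt i + ∑ j with Incident i j, lnr j := by
  simp only [wLvec, adj_pt_lnr_iff, Finset.sum_filter]

lemma herm_wPvec_right (u : V) (j : Fin 13) : herm u (wPvec (lnr j)) =
    ω ^ 2 * θ * herm u (lnr j) + ∑ i with Incident i j, herm u (pt i) := by
  simp only [wPvec_lnr, ← hermForm_apply, map_add, map_smul, map_sum, smul_eq_mul]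

lemma herm_wPvec_left (j : Fin 13) (v : V) : herm (wPvec (lnr j)) v =
    -(ω * θ) * herm (lnr j) v + ∑ i with Incident i j, herm (pt i) v := by
  rw [← conj_herm, herm_wPvec_right, map_add, map_mul, map_sum, ← conj_neg_ω_mul_θ,
    Complex.conj_conj]
  simp only [conj_herm]

lemma herm_wLvec_right (u : V) (i : Fin 13) : herm u (wLvec (pt i)) =
    -(ω * θ) * herm u (pt i) + ∑ j with Incident i j, herm u (lnr j) := by
  simp only [wLvec_pt, ← hermForm_apply, map_add, map_smul, map_sum, smul_eq_mul]

lemma herm_pt_wPvec (i j : Fin 13) : herm (pt i) (wPvec (lnr j)) = 0 := by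
  simp only [herm_wPvec_right, herm_pt_lnr, herm_pt_pt, Finset.sum_ite_eq, Finset.mem_filter,
    Finset.mem_univ, true_and]
  split_ifs
  · linear_combination ω_sq_mul_θ_mul_neg_ω_mul_θ
  · simp

lemma herm_lnr_wLvec (j i : Fin 13) : herm (lnr j) (wLvec (pt i)) = 0 := by
  simp only [herm_wLvec_right, herm_lnr_pt, herm_lnr_lnr, Finset.sum_ite_eq, Finset.mem_filter,
    Finset.mem_univ, true_and]
  split_ifs
  · linear_combination ω_sq_mul_θ_mul_neg_ω_mul_θ
  · simp

-- The value does not depend on `j`: a line `k ≠ j` meets `j` in one point, and `-3 + 4 = 1`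
-- for `k = j`.
lemma herm_lnr_wPvec (k j : Fin 13) : herm (lnr k) (wPvec (lnr j)) = ω ^ 2 * θ := by
  have hsum : ∑ i with Incident i j, herm (lnr k) (pt i) =
      (if j = k then 4 else 1 : ℕ) * (ω ^ 2 * θ) := by
    simp only [herm_lnr_pt, ← Finset.sum_filter, Finset.filter_filter, Finset.sum_const,
      card_points_on_two_lines, nsmul_eq_mul]
  rw [herm_wPvec_right, hsum, herm_lnr_lnr]
  obtain rfl | hjk := eq_or_ne j k
  · simp only [↓reduceIte]; push_cast; ring
  · simp [hjk, hjk.symm]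

lemma herm_pt_wLvec (k i : Fin 13) : herm (pt k) (wLvec (pt i)) = -(ω * θ) := by
  have hsum : ∑ j with Incident i j, herm (pt k) (lnr j) =
      (if i = k then 4 else 1 : ℕ) * -(ω * θ) := by
    simp only [herm_pt_lnr, ← Finset.sum_filter, Finset.filter_filter, Finset.sum_const,
      card_lines_through_two_points, nsmul_eq_mul]
  rw [herm_wLvec_right, hsum, herm_pt_pt]
  obtain rfl | hik := eq_or_ne i k
  · simp only [↓reduceIte]; push_cast; ring
  · simp [hik, hik.symm]

lemma herm_wPvec_pt (j i : Fin 13) : herm (wPvec (lnr j)) (pt i) = 0 := by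
  rw [← conj_herm, herm_pt_wPvec, map_zero]

lemma herm_wPvec_lnr (j k : Fin 13) : herm (wPvec (lnr j)) (lnr k) = -(ω * θ) := by
  rw [← conj_herm, herm_lnr_wPvec, ← conj_neg_ω_mul_θ, Complex.conj_conj]

lemma herm_wLvec_lnr (i j : Fin 13) : herm (wLvec (pt i)) (lnr j) = 0 := by
  rw [← conj_herm, herm_lnr_wLvec, map_zero]

lemma herm_wLvec_pt (i k : Fin 13) : herm (wLvec (pt i)) (pt k) = ω ^ 2 * θ := by
  rw [← conj_herm, herm_pt_wLvec, conj_neg_ω_mul_θ]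

lemma herm_wPvec_wPvec (j k : Fin 13) : herm (wPvec (lnr j)) (wPvec (lnr k)) = 3 := by
  simp [herm_wPvec_right, herm_wPvec_lnr, herm_wPvec_pt, ← ω_sq_mul_θ_mul_neg_ω_mul_θ]

lemma herm_wLvec_wLvec (i k : Fin 13) : herm (wLvec (pt i)) (wLvec (pt k)) = 3 := by
  simp [herm_wLvec_right, herm_wLvec_lnr, herm_wLvec_pt, ← ω_sq_mul_θ_mul_neg_ω_mul_θ, mul_comm]

lemma herm_wPvec_wLvec (j i : Fin 13) :
    herm (wPvec (lnr j)) (wLvec (pt i)) = -(4 * θ * ω) := by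
  have hcard := card_lines_through_two_points i i
  simp only [and_self, if_true] at hcard
  simp only [herm_wLvec_right, herm_wPvec_lnr, herm_wPvec_pt, Finset.sum_const, hcard,
    nsmul_eq_mul]
  push_cast
  ring

lemma herm_wLvec_wPvec (i j : Fin 13) :
    herm (wLvec (pt i)) (wPvec (lnr j)) = 4 * ω ^ 2 * θ := by
  rw [← conj_herm, herm_wPvec_wLvec]
  simp only [map_neg, map_mul, map_ofNat, conj_θ, conj_ω]
  ring

/-- The family consisting of `w_𝒫` and the thirteen point roots. -/
def pointFrame (o : Option (Fin 13)) : V := o.elim (wPvec (lnr 0)) pt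

lemma isOrthoᵢ_pointFrame : hermForm.IsOrthoᵢ pointFrame := by
  rintro (_ | i) (_ | j) hij
  · exact absurd rfl hij
  · exact herm_wPvec_pt 0 j
  · exact herm_pt_wPvec i 0
  · exact (herm_pt_pt i j).trans (if_neg fun h => hij (congrArg some h))

lemma hermForm_pointFrame_self_ne_zero (o : Option (Fin 13)) :
    hermForm (pointFrame o) (pointFrame o) ≠ 0 := by
  cases o <;>
    simp [hermForm_apply, pointFrame, herm_wPvec_wPvec, herm_pt_pt]

/-- The orthogonal basis of `ℂ¹⁴` consisting of `w_𝒫` and the thirteen point roots. -/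
def pointBasis : Module.Basis (Option (Fin 13)) ℂ V :=
  basisOfLinearIndependentOfCardEqFinrank
    (LinearMap.linearIndependent_of_isOrthoᵢ isOrthoᵢ_pointFrame hermForm_pointFrame_self_ne_zero)
    (by simp)

lemma coe_pointBasis : ⇑pointBasis = pointFrame :=
  coe_basisOfLinearIndependentOfCardEqFinrank _ _

lemma ext_herm_roots {u v : V} (hpt : ∀ i, herm (pt i) u = herm (pt i) v)
    (hlnr : ∀ j, herm (lnr j) u = herm (lnr j) v) : u = v := by
  have hwP : herm (wPvec (lnr 0)) u = herm (wPvec (lnr 0)) v := by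
    simp only [herm_wPvec_left, hpt, hlnr]
  rw [← sub_eq_zero]
  refine eq_zero_of_forall_basis_isOrtho (B := hermForm) pointBasis
    (coe_pointBasis ▸ isOrthoᵢ_pointFrame) (coe_pointBasis ▸ hermForm_pointFrame_self_ne_zero) ?_
  rw [coe_pointBasis]
  rintro (_ | i)
  · rw [map_sub, sub_eq_zero]
    exact hwP
  · rw [map_sub, sub_eq_zero]
    exact hpt i

lemma wPvec_lnr_eq (j k : Fin 13) : wPvec (lnr j) = wPvec (lnr k) :=
  ext_herm_roots (fun i => by simp only [herm_pt_wPvec]) (fun l => by simp only [herm_lnr_wPvec])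

lemma wLvec_pt_eq (i k : Fin 13) : wLvec (pt i) = wLvec (pt k) :=
  ext_herm_roots (fun l => by simp only [herm_pt_wLvec]) (fun j => by simp only [herm_lnr_wLvec])

/-! ### Lifting collineations -/

lemma mem_Lset_iff_apply_mem {g : V ≃ₗ[ℂ] V} (hg : ∀ u v, herm (g u) (g v) = herm u v)
    (hD : g '' D26 = D26) (v : V) : v ∈ Lset ↔ g v ∈ Lset := by
  rw [mem_Lset_iff_forall_herm, mem_Lset_iff_forall_herm]
  conv_rhs => rw [← hD, Set.forall_mem_image]
  simp only [hg]

/-- The linear map that permutes the point roots by `σ` and fixes `w_𝒫`. -/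
def permutePoints (σ : Equiv.Perm (Fin 13)) : V ≃ₗ[ℂ] V :=
  pointBasis.equiv pointBasis σ.optionCongr

lemma permutePoints_pt (σ : Equiv.Perm (Fin 13)) (i : Fin 13) :
    permutePoints σ (pt i) = pt (σ i) := by
  simpa [permutePoints, coe_pointBasis, pointFrame] using
    pointBasis.equiv_apply (some i) pointBasis σ.optionCongr

lemma permutePoints_wPvec (σ : Equiv.Perm (Fin 13)) (j : Fin 13) :
    permutePoints σ (wPvec (lnr j)) = wPvec (lnr j) := by
  rw [wPvec_lnr_eq j 0]
  simpa [permutePoints, coe_pointBasis, pointFrame] using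
    pointBasis.equiv_apply none pointBasis σ.optionCongr

lemma herm_permutePoints (σ : Equiv.Perm (Fin 13)) (u v : V) :
    herm (permutePoints σ u) (permutePoints σ v) = herm u v := by
  have hform : (hermForm.comp (permutePoints σ).toLinearMap).compl₂ (permutePoints σ).toLinearMap =
      hermForm := by
    refine LinearMap.ext_basis pointBasis pointBasis fun o o' => ?_
    rw [coe_pointBasis]
    rcases o with _ | i <;> rcases o' with _ | k <;>
      simp [pointFrame, hermForm_apply, permutePoints_pt, permutePoints_wPvec, herm_wPvec_pt,
        herm_pt_wPvec, herm_pt_pt]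
  exact DFunLike.congr_fun (DFunLike.congr_fun hform u) v

section Collineation

variable {σ τ : Equiv.Perm (Fin 13)}

lemma permutePoints_lnr (hστ : ∀ i j, Incident (σ i) (τ j) ↔ Incident i j) (j : Fin 13) :
    permutePoints σ (lnr j) = lnr (τ j) := by
  have hsum : permutePoints σ (∑ i with Incident i j, pt i) = ∑ i with Incident i (τ j), pt i := by
    rw [map_sum]
    refine Finset.sum_equiv σ (fun i => ?_) fun i _ => permutePoints_pt σ i
    simp [hστ]
  have hw : permutePoints σ (wPvec (lnr j)) = wPvec (lnr (τ j)) := by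
    rw [permutePoints_wPvec, wPvec_lnr_eq]
  rw [wPvec_lnr, wPvec_lnr, map_add, hsum, map_smul, add_left_inj] at hw
  exact smul_right_injective V (by simp [ω_ne_zero, θ_ne_zero]) hw

lemma permutePoints_mem_Gsub (hστ : ∀ i j, Incident (σ i) (τ j) ↔ Incident i j) :
    permutePoints σ ∈ Gsub := by
  have hpt := image_range_eq_range_of_semiconj σ.surjective (permutePoints_pt σ)
  have hlnr := image_range_eq_range_of_semiconj τ.surjective (permutePoints_lnr hστ)
  have hD : permutePoints σ '' D26 = D26 := by
    rw [D26, Set.image_union, hpt, hlnr]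
  exact ⟨⟨mem_Lset_iff_apply_mem (herm_permutePoints σ) hD, herm_permutePoints σ⟩, hpt, hlnr⟩

end Collineation

lemma exists_mem_Gsub_pt (i k : Fin 13) : ∃ g ∈ Gsub, g (pt i) = pt k := by
  refine ⟨_, permutePoints_mem_Gsub (incident_shift_iff (pointLabel k - pointLabel i)), ?_⟩
  rw [permutePoints_pt, shiftPoints_sub_apply]

lemma exists_mem_Gsub_lnr (j k : Fin 13) : ∃ g ∈ Gsub, g (lnr j) = lnr k := by
  have hshift := incident_shift_iff (lineLabel k - lineLabel j)
  refine ⟨_, permutePoints_mem_Gsub hshift, ?_⟩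
  rw [permutePoints_lnr hshift, shiftLines_sub_apply]

/-! ### The fixed sublattice -/

section FixedVectors

variable {v : V}

lemma apply_eq_self_of_forall_herm_eq {g : V ≃ₗ[ℂ] V} (hg : g ∈ Gsub) {α β : ℂ}
    (hpt : ∀ i, herm (pt i) v = α) (hlnr : ∀ j, herm (lnr j) v = β) : g v = v := by
  obtain ⟨⟨-, hiso⟩, himage_pt, himage_lnr⟩ := hg
  refine ext_herm_roots (fun i => ?_) fun j => ?_
  · obtain ⟨_, ⟨k, rfl⟩, hk⟩ := himage_pt.ge ⟨i, rfl⟩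
    rw [hpt i, ← hk, hiso, hpt k]
  · obtain ⟨_, ⟨k, rfl⟩, hk⟩ := himage_lnr.ge ⟨j, rfl⟩
    rw [hlnr j, ← hk, hiso, hlnr k]

lemma herm_eq_of_forall_apply_eq (hv : ∀ g ∈ Gsub, g v = v) {r s : V}
    (hrs : ∃ g ∈ Gsub, g r = s) : herm r v = herm s v := by
  obtain ⟨g, hg, rfl⟩ := hrs
  conv_rhs => rw [← hv g hg, hg.1.2]

lemma herm_pt_combination (a b : ℂ) (i : Fin 13) :
    herm (pt i) (a • wPvec (lnr 0) + b • wLvec (pt 0)) = b * -(ω * θ) := by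
  simp only [← hermForm_apply, map_add, map_smul, smul_eq_mul]
  simp [hermForm_apply, herm_pt_wPvec, herm_pt_wLvec]

lemma herm_lnr_combination (a b : ℂ) (j : Fin 13) :
    herm (lnr j) (a • wPvec (lnr 0) + b • wLvec (pt 0)) = a * (ω ^ 2 * θ) := by
  simp only [← hermForm_apply, map_add, map_smul, smul_eq_mul]
  simp [hermForm_apply, herm_lnr_wPvec, herm_lnr_wLvec]

lemma forall_apply_eq_iff_mem_span : (∀ g ∈ Gsub, g v = v) ↔
    v ∈ Submodule.span ℂ {wPvec (lnr 0), wLvec (pt 0)} := by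
  rw [Submodule.mem_span_pair]
  constructor
  · intro hv
    refine ⟨herm (lnr 0) v / (ω ^ 2 * θ), herm (pt 0) v / -(ω * θ),
      ext_herm_roots (fun i => ?_) fun j => ?_⟩
    · rw [herm_pt_combination, div_mul_cancel₀ _ (by simp [ω_ne_zero, θ_ne_zero])]
      exact herm_eq_of_forall_apply_eq hv (exists_mem_Gsub_pt 0 i)
    · rw [herm_lnr_combination, div_mul_cancel₀ _ (by simp [ω_ne_zero, θ_ne_zero])]
      exact herm_eq_of_forall_apply_eq hv (exists_mem_Gsub_lnr 0 j)
  · rintro ⟨a, b, rfl⟩ g hg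
    exact apply_eq_self_of_forall_herm_eq hg (herm_pt_combination a b) (herm_lnr_combination a b)

lemma combination_mem_Lset_iff {a b : ℂ} :
    a • wPvec (lnr 0) + b • wLvec (pt 0) ∈ Lset ↔ a ∈ ℰ ∧ b ∈ ℰ := by
  simp [mem_Lset_iff_forall_herm, D26, or_imp, forall_and, -mul_neg, herm_pt_combination,
    herm_lnr_combination, mul_neg_ω_mul_θ_mem_θℰ_iff, mul_ω_sq_mul_θ_mem_θℰ_iff, and_comm]

lemma mem_Lset_and_mem_span_iff :
    v ∈ Lset ∧ v ∈ Submodule.span ℂ {wPvec (lnr 0), wLvec (pt 0)} ↔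
      v ∈ EisSpan {wPvec (lnr 0), wLvec (pt 0)} := by
  rw [EisSpan_eq_span, SetLike.mem_coe, Submodule.mem_span_pair, Submodule.mem_span_pair]
  constructor
  · rintro ⟨hv, a, b, rfl⟩
    obtain ⟨ha, hb⟩ := combination_mem_Lset_iff.1 hv
    exact ⟨⟨a, ha⟩, ⟨b, hb⟩, rfl⟩
  · rintro ⟨a, b, rfl⟩
    exact ⟨combination_mem_Lset_iff.2 ⟨a.2, b.2⟩, a, b, rfl⟩

end FixedVectors

lemma herm_wPvec_sub_wLvec_self :
    herm (wPvec (lnr 0) - wLvec (pt 0)) (wPvec (lnr 0) - wLvec (pt 0)) = -6 := by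
  rw [← hermForm_apply]
  simp only [map_sub, LinearMap.sub_apply, hermForm_apply, herm_wPvec_wPvec, herm_wPvec_wLvec,
    herm_wLvec_wPvec, herm_wLvec_wLvec, θ_eq]
  linear_combination (-8 * ω + 4) * ω_sq + 8 * ω_sq

lemma det_gram_wPvec_wLvec (j i : Fin 13) :
    herm (wPvec (lnr j)) (wPvec (lnr j)) * herm (wLvec (pt i)) (wLvec (pt i)) -
      herm (wPvec (lnr j)) (wLvec (pt i)) * herm (wLvec (pt i)) (wPvec (lnr j)) = -39 := by
  rw [herm_wPvec_wPvec, herm_wLvec_wLvec, herm_wPvec_wLvec, herm_wLvec_wPvec]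
  linear_combination 16 * θ ^ 2 * ω_cube + 16 * θ_sq

/-- `w_𝒫 = ω²θl + Σ_{x ∈ l} x` is independent of the line `l`, and
`w_ℒ = -ωθx + Σ_{l ∋ x} l` is independent of the point `x`; both have norm `3`,
`⟨w_𝒫, w_ℒ⟩ = -4θω`, `w_𝒫` is orthogonal to the point roots and `w_ℒ` to the line
roots; the sublattice `F` spanned by them over `ℰ` is primitive, has signature
`(1,1)` and discriminant `39` (Gram determinant `-39`), and is exactly the
sublattice of `L` fixed pointwise by `G`. -/
theorem stmt13 :
    (∀ j k : Fin 13, wPvec (lnr j) = wPvec (lnr k)) ∧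
    (∀ j k : Fin 13, wLvec (pt j) = wLvec (pt k)) ∧
    (herm (wPvec (lnr 0)) (wPvec (lnr 0)) = 3) ∧
    (herm (wLvec (pt 0)) (wLvec (pt 0)) = 3) ∧
    (herm (wPvec (lnr 0)) (wLvec (pt 0)) = -(4 * θ * ω)) ∧
    (∀ i : Fin 13, herm (wPvec (lnr 0)) (pt i) = 0) ∧
    (∀ i : Fin 13, herm (wLvec (pt 0)) (lnr i) = 0) ∧
    (∀ v ∈ Lset, v ∈ (Submodule.span ℂ ({wPvec (lnr 0), wLvec (pt 0)} : Set V)) →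
      v ∈ EisSpan {wPvec (lnr 0), wLvec (pt 0)}) ∧
    (∃ v ∈ (Submodule.span ℂ ({wPvec (lnr 0), wLvec (pt 0)} : Set V)),
      (herm v v).re < 0) ∧
    (herm (wPvec (lnr 0)) (wPvec (lnr 0)) * herm (wLvec (pt 0)) (wLvec (pt 0)) -
      herm (wPvec (lnr 0)) (wLvec (pt 0)) * herm (wLvec (pt 0)) (wPvec (lnr 0)) = -39) ∧
    ({v : V | v ∈ Lset ∧ ∀ g ∈ Gsub, g v = v} =
      EisSpan {wPvec (lnr 0), wLvec (pt 0)}) := by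
  have hprimitive v (hv : v ∈ Lset)
      (hspan : v ∈ Submodule.span ℂ {wPvec (lnr 0), wLvec (pt 0)}) :
      v ∈ EisSpan {wPvec (lnr 0), wLvec (pt 0)} :=
    mem_Lset_and_mem_span_iff.1 ⟨hv, hspan⟩
  have hnegative : ∃ v ∈ Submodule.span ℂ {wPvec (lnr 0), wLvec (pt 0)}, (herm v v).re < 0 := by
    refine ⟨_, Submodule.sub_mem _ (Submodule.mem_span_of_mem (.inl rfl))
      (Submodule.mem_span_of_mem (.inr rfl)), ?_⟩
    simp [herm_wPvec_sub_wLvec_self]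
  have hfixed : {v : V | v ∈ Lset ∧ ∀ g ∈ Gsub, g v = v} =
      EisSpan {wPvec (lnr 0), wLvec (pt 0)} := by
    ext v
    rw [Set.mem_ofPred_eq, forall_apply_eq_iff_mem_span, mem_Lset_and_mem_span_iff]
  exact ⟨wPvec_lnr_eq, wLvec_pt_eq, herm_wPvec_wPvec 0 0, herm_wLvec_wLvec 0 0,
    herm_wPvec_wLvec 0 0, herm_wPvec_pt 0, herm_wLvec_lnr 0, hprimitive, hnegative,
    det_gram_wPvec_wLvec 0 0, hfixed⟩

end Bimonster
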